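/- Let k be a field and N ≥ 2 an integer. Let X be an N-complex of k-vector spaces: a family (X^i)_{i∈ℤ} of k-vector spaces with k-linear maps d^i : X^i → X^{i+1} such that every N-fold composite d^{i+N−1}∘⋯∘d^{i} is zero. Write d^{(l),i} = d^{i+l−1}∘⋯∘d^{i} : X^i → X^{i+l} for the l-fold composite (with d^{(0),i} = id). Suppose X is N-acyclic, i.e. all its homologies vanish: for every i ∈ ℤ and every 1 ≤ r ≤ N−1, ker(d^{(r),i}) = im(d^{(N−r),i−(N−r)}). Then X is contractible (a zero object of the homotopy category of N-complexes): there exist k-linear maps S^i : X^i → X^{i+1−N} such that for every i ∈ ℤ, Σ_{l=0}^{N−1} d^{(N−1−l),\,i+l+1−N} ∘ S^{i+l} ∘ d^{(l),i} = id_{X^i}. -/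

import Mathlib

/-- Transport a graded component along an equality of degrees. -/
def castLM {k : Type*} [DivisionRing k] {X : ℤ → Type*} [∀ i, AddCommGroup (X i)]
    [∀ i, Module k (X i)] {i j : ℤ} (h : i = j) : X i →ₗ[k] X j := by
  subst h; exact LinearMap.id

/-- The `l`-fold iterate `d^{(l),i} : X^i → X^{i+l}` of the differential of an `N`-complex. -/
def dpow {k : Type*} [DivisionRing k] {X : ℤ → Type*} [∀ i, AddCommGroup (X i)]
    [∀ i, Module k (X i)] (d : ∀ i : ℤ, X i →ₗ[k] X (i + 1)) :
    (l : ℕ) → (i : ℤ) → (X i →ₗ[k] X (i + l))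
  | 0, i => castLM (by simp)
  | l + 1, i => castLM (by push_cast; ring) ∘ₗ (dpow d l (i + 1)) ∘ₗ d i

/-- `l`-fold differential with free target degree. -/
def eC {k : Type*} [DivisionRing k] {X : ℤ → Type*} [∀ i, AddCommGroup (X i)]
    [∀ i, Module k (X i)] (d : ∀ i : ℤ, X i →ₗ[k] X (i + 1)) (l : ℕ) (i j : ℤ)
    (h : i + l = j) : X i →ₗ[k] X j := castLM h ∘ₗ dpow d l i

section
variable {k : Type*} [Field k] {X : ℤ → Type*} [∀ i, AddCommGroup (X i)]
    [∀ i, Module k (X i)] (d : ∀ i : ℤ, X i →ₗ[k] X (i + 1))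

theorem castLM_castLM {a b c : ℤ} (h : a = b) (h' : b = c) (x : X a) :
    castLM (k := k) h' (castLM (k := k) h x) = castLM (k := k) (h.trans h') x := by
  subst h; subst h'; rfl

theorem castLM_rfl {a : ℤ} (h : a = a) (x : X a) : castLM (k := k) h x = x := rfl

theorem eC_zero (i : ℤ) (h : i + (0 : ℕ) = i) (x : X i) : eC d 0 i i h x = x := by
  simp [eC, dpow, castLM_castLM, castLM_rfl]

theorem eC_succ (l : ℕ) (i j : ℤ) (h : i + (l + 1 : ℕ) = j) (x : X i) :
    eC d (l + 1) i j h x = eC d l (i + 1) j (by push_cast at h; omega) (d i x) := by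
  simp [eC, dpow, castLM_castLM]

theorem eC_one (i : ℤ) (x : X i) : eC d 1 i (i + 1) (by simp) x = d i x := by
  rw [eC_succ, eC_zero]

theorem eC_comp (l : ℕ) : ∀ (m n : ℕ) (i j j' : ℤ) (h : i + l = j) (h' : j + m = j')
    (hn : n = l + m) (x : X i),
    eC d m j j' h' (eC d l i j h x) = eC d n i j' (by subst hn; push_cast; omega) x := by
  induction l with
  | zero =>
    intro m n i j j' h h' hn x
    obtain rfl : i = j := by simpa using h
    obtain rfl : n = m := by omega
    rw [eC_zero]
  | succ l ih =>
    intro m n i j j' h h' hn x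
    obtain rfl : n = (l + m) + 1 := by omega
    rw [eC_succ, eC_succ, ih m (l + m) _ _ _ _ _ rfl]

theorem eC_comm (F : ∀ i, X i →ₗ[k] X i) (hF : ∀ i x, F (i + 1) (d i x) = d i (F i x))
    (l : ℕ) : ∀ (i j : ℤ) (h : i + l = j) (x : X i),
    F j (eC d l i j h x) = eC d l i j h (F i x) := by
  induction l with
  | zero =>
    intro i j h x
    obtain rfl : i = j := by simpa using h
    rw [eC_zero, eC_zero]
  | succ l ih =>
    intro i j h x
    rw [eC_succ, eC_succ, ih, hF]

theorem exists_ginv {V W : Type*} [AddCommGroup V] [Module k V] [AddCommGroup W] [Module k W]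
    (f : V →ₗ[k] W) : ∃ g : W →ₗ[k] V, ∀ x, f (g (f x)) = f x := by
  obtain ⟨s, hs⟩ := f.rangeRestrict.exists_rightInverse_of_surjective f.range_rangeRestrict
  obtain ⟨p, hp⟩ := (LinearMap.range f).subtype.exists_leftInverse_of_injective
    (LinearMap.range f).ker_subtype
  refine ⟨s ∘ₗ p, fun x => ?_⟩
  have h1 : p (f x) = f.rangeRestrict x := LinearMap.congr_fun hp (f.rangeRestrict x)
  have h2 := LinearMap.congr_fun hs (f.rangeRestrict x)
  have h3 := congrArg Subtype.val h2
  simpa [h1] using h3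

end

/-- over a field `k`, an `N`-acyclic `N`-complex `X` of `k`-vector spaces
(all homologies vanish: `ker d^{(r),i} = im d^{(N−r),i−(N−r)}`) is contractible: there are
linear maps `S^i : X^i → X^{i+1−N}` with
`Σ_{l=0}^{N−1} d^{(N−1−l),i+l+1−N} ∘ S^{i+l} ∘ d^{(l),i} = id` for every `i`. -/
theorem acyclic_N_complex_contractible
    {k : Type*} [Field k] (N : ℕ) (hN : 2 ≤ N)
    (X : ℤ → Type*) [∀ i, AddCommGroup (X i)] [∀ i, Module k (X i)]
    (d : ∀ i : ℤ, X i →ₗ[k] X (i + 1))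
    (hdN : ∀ i : ℤ, dpow d N i = 0)
    (hacyc : ∀ (i : ℤ) (r : ℕ), 1 ≤ r → r ≤ N - 1 →
      LinearMap.ker (dpow d r i) =
        LinearMap.range ((castLM (X := X) (by omega) : X ((i - ((N - r : ℕ) : ℤ)) + ((N - r : ℕ) : ℤ)) →ₗ[k] X i) ∘ₗ
          dpow d (N - r) (i - ((N - r : ℕ) : ℤ)))) :
    ∃ S : ∀ i : ℤ, X i →ₗ[k] X (i + 1 - N),
      ∀ i : ℤ,
        (∑ l : Fin N,
          (castLM (X := X) (by have := l.isLt; omega) :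
              X ((i + ((l : ℕ) : ℤ) + 1 - N) + ((N - 1 - (l : ℕ) : ℕ) : ℤ)) →ₗ[k] X i) ∘ₗ
            dpow d (N - 1 - (l : ℕ)) (i + ((l : ℕ) : ℤ) + 1 - N) ∘ₗ
            S (i + ((l : ℕ) : ℤ)) ∘ₗ
            dpow d (l : ℕ) i) = LinearMap.id := by
  obtain ⟨M, rfl⟩ : ∃ M, N = M + 1 := ⟨N - 1, by omega⟩
  have hzero : ∀ i j h x, eC d (M + 1) i j h x = 0 := by
    intro i j h x
    simp [eC, hdN]
  have hex : ∀ (i j : ℤ) (h : j + 1 = i) (i' : ℤ) (h' : i + M = i') (x : X i),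
      eC d M i i' h' x = 0 → ∃ z, eC d 1 j i (by simpa using h) z = x := by
    intro i j h i' h' x hx
    subst h'
    have hx' : x ∈ LinearMap.ker (dpow d M i) := by
      simpa [eC, castLM_rfl] using hx
    rw [hacyc i M (by omega) (by omega)] at hx'
    obtain ⟨z, hz⟩ := hx'
    have key : ∀ (m : ℕ) (hm : m = 1) (a : ℤ) (ha : a + m = i) (z : X a),
        eC d m a i ha z = x → ∃ z, eC d 1 j i (by simpa using h) z = x := by
      intro m hm a ha z hz
      subst hm
      obtain rfl : a = j := by push_cast at ha; omega
      exact ⟨z, hz⟩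
    exact key _ (by omega) _ (by omega) z hz
  have hg : ∀ (i j : ℤ) (h : j + M = i), ∃ g : X i →ₗ[k] X j,
      ∀ x, eC d M j i h (g (eC d M j i h x)) = eC d M j i h x :=
    fun i j h => exists_ginv _
  choose g hg using hg
  -- the general summand
  let G : ∀ (i j : ℤ) (l m : ℕ) (a b : ℤ) (_ : i + l = a) (_ : b + M = a) (_ : b + m = j),
      X i →ₗ[k] X j := fun i j l m a b h1 h2 h3 =>
    eC d m b j h3 ∘ₗ g a b h2 ∘ₗ eC d l i a h1
  have Gcongr : ∀ (i j : ℤ) (l l' m m' : ℕ) (a b a' b' : ℤ) h1 h2 h3 h1' h2' h3',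
      l = l' → G i j l m a b h1 h2 h3 = G i j l' m' a' b' h1' h2' h3' := by
    intro i j l l' m m' a b a' b' h1 h2 h3 h1' h2' h3' hl
    subst hl
    obtain rfl : a = a' := by omega
    obtain rfl : b = b' := by omega
    obtain rfl : m = m' := by omega
    rfl
  let T : ∀ i, X i →ₗ[k] X i := fun i => ∑ l : Fin (M + 1),
    G i i l (M - l) (i + (l : ℕ)) (i + (l : ℕ) - M) rfl (by omega) (by omega)
  have hT : ∀ i x, T (i + 1) (d i x) = d i (T i x) := by
    intro i x
    let F : ℕ → X (i + 1) := fun l => if hl : l ≤ M + 1 then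
      G i (i + 1) l (M + 1 - l) (i + l) (i + l - M) rfl (by omega) (by omega) x else 0
    have e1 : T (i + 1) (d i x) = ∑ l ∈ Finset.range (M + 1), F (l + 1) := by
      rw [← Fin.sum_univ_eq_sum_range (fun l => F (l + 1))]
      simp only [T, LinearMap.sum_apply]
      refine Finset.sum_congr rfl fun l _ => ?_
      have hl := l.isLt
      simp only [F]
      rw [dif_pos (by omega)]
      rw [Gcongr i (i + 1) (l + 1) (l + 1) _ (M - l) _ _ (i + 1 + (l : ℕ)) (i + 1 + (l : ℕ) - M)
        _ _ _ (by push_cast; omega) (by omega) (by omega) rfl]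
      simp only [G, LinearMap.comp_apply]
      rw [eC_succ]
    have e2 : d i (T i x) = ∑ l ∈ Finset.range (M + 1), F l := by
      rw [← Fin.sum_univ_eq_sum_range F]
      simp only [T, LinearMap.sum_apply, map_sum]
      refine Finset.sum_congr rfl fun l _ => ?_
      have hl := l.isLt
      simp only [F]
      rw [dif_pos (by omega)]
      simp only [G, LinearMap.comp_apply]
      rw [← eC_one, eC_comp d _ 1 (M + 1 - l) _ _ _ _ _ (by omega)]
    have F0 : F 0 = 0 := by
      simp only [F]
      rw [dif_pos (by omega)]
      simp only [G, LinearMap.comp_apply]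
      exact hzero _ _ _ _
    have FN : F (M + 1) = 0 := by
      simp only [F]
      rw [dif_pos le_rfl]
      simp only [G, LinearMap.comp_apply, hzero, map_zero]
    have a1 := Finset.sum_range_succ F (M + 1)
    have a2 := Finset.sum_range_succ' F (M + 1)
    rw [e1, e2]
    rw [F0, add_zero] at a2
    rw [FN, add_zero] at a1
    rw [← a1, ← a2]
  let U : ∀ i, X i →ₗ[k] X i := fun i => LinearMap.id - T i
  have hU : ∀ i x, U (i + 1) (d i x) = d i (U i x) := by
    intro i x
    simp [U, hT]
  have hUr : ∀ (i j : ℤ) (h : j + 1 = i) (x : X i),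
      ∃ z, eC d 1 j i (by simpa using h) z = U i x := by
    intro i j h x
    change U i x ∈ LinearMap.range (eC d 1 j i (by simpa using h))
    simp only [U, T, LinearMap.sub_apply, LinearMap.id_apply, LinearMap.sum_apply]
    rw [Fin.sum_univ_castSucc, sub_add_eq_sub_sub_swap]
    refine Submodule.sub_mem _ ?_ (Submodule.sum_mem _ fun l _ => ?_)
    · apply hex i j h (i + M) rfl
      rw [map_sub, sub_eq_zero]
      rw [Gcongr i i _ M _ 0 _ _ (i + M) i _ _ _ rfl rfl (by simp) (by simp)]
      simp only [G, LinearMap.comp_apply]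
      rw [eC_zero, hg]
    · have hl := l.isLt
      simp only [G, LinearMap.comp_apply, Fin.val_castSucc]
      rw [← eC_comp d (M - l - 1) 1 (M - l) _ j i (by omega) (by simpa using h) (by omega)]
      exact ⟨_, rfl⟩
  have hUn : ∀ (n : ℕ) (i j : ℤ) (h : j + n = i) (x : X i),
      ∃ z, eC d n j i h z = ((U i : Module.End k (X i)) ^ n) x := by
    intro n
    induction n with
    | zero =>
      intro i j h x
      obtain rfl : j = i := by simpa using h
      exact ⟨x, by rw [eC_zero]; simp⟩
    | succ n ih =>
      intro i j h x
      obtain ⟨z, hz⟩ := ih i (j + 1) (by push_cast at h; omega) x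
      obtain ⟨w, hw⟩ := hUr (j + 1) j rfl z
      refine ⟨w, ?_⟩
      rw [pow_succ', Module.End.mul_apply, ← hz, eC_comm d U hU, ← hw,
        eC_comp d 1 n (n + 1) _ _ _ _ _ (by omega)]
  have hR : ∀ i, ∃ R : X i →ₗ[k] X i, (∀ x, R (T i x) = x) ∧ (∀ x, T i (R x) = x) := by
    intro i
    have hn : IsNilpotent (U i : Module.End k (X i)) := by
      refine ⟨M + 1, LinearMap.ext fun x => ?_⟩
      obtain ⟨z, hz⟩ := hUn (M + 1) i (i - (M + 1 : ℕ)) (by omega) x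
      rw [← hz, hzero]; rfl
    obtain ⟨u, hu⟩ := hn.isUnit_one_sub
    have huT : (u : Module.End k (X i)) = T i := by
      rw [hu]
      apply LinearMap.ext
      intro x
      simp [U]
    refine ⟨(u⁻¹ : (Module.End k (X i))ˣ).val, fun x => ?_, fun x => ?_⟩
    · rw [← huT]; exact LinearMap.congr_fun u.inv_mul x
    · rw [← huT]; exact LinearMap.congr_fun u.mul_inv x
  choose R hR1 hR2 using hR
  have hRd : ∀ i x, R (i + 1) (d i x) = d i (R i x) := by
    intro i x
    rw [← hR1 (i + 1) (d i (R i x)), hT, hR2]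
  refine ⟨fun i => g i _ (by push_cast; omega) ∘ₗ R i, fun i => LinearMap.ext fun x => ?_⟩
  rw [LinearMap.id_apply]
  conv_rhs => rw [← hR2 i x]
  simp only [T, LinearMap.sum_apply]
  refine Finset.sum_congr rfl fun l _ => ?_
  have hl := l.isLt
  rw [Gcongr i i l l _ (M + 1 - 1 - l) _ _ (i + (l : ℕ)) (i + (l : ℕ) + 1 - (M + 1 : ℕ)) _ _ _ rfl
    (by push_cast; omega) (by push_cast; omega) rfl]
  simp only [G, LinearMap.comp_apply]
  rw [← eC_comm d R hRd]
  rfl
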